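/- Let σ > 0, μ0 < μ1, p0 = p1 = 1/2, and let φ0 and φ1 be the probability density functions of N(μ0, σ²) and N(μ1, σ²) respectively. For t ∈ ℝ define A11(t) = ∫_{−∞}^{t} φ0, A22(t) = ∫_{t}^{∞} φ1, q0(t) = (1/2)·A11(t) + (1/2)·(1−A22(t)), and the single-threshold mutual information I_1(t) = H_b(q0(t)) − (1/2)·H_b(A11(t)) − (1/2)·H_b(A22(t)). Then t* = (μ0 + μ1)/2 is the unique maximizer of I_1: I_1(t) ≤ I_1(t*) for all t ∈ ℝ, with equality only for t = t*. -/

import Mathlib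

open MeasureTheory Real Set

/-- Binary entropy function. -/
noncomputable def Hb (w : ℝ) : ℝ := -(w * Real.log w) - (1 - w) * Real.log (1 - w)

/-- `A11 t = ∫_{-∞}^t φ0`. -/
noncomputable def A11 (φ0 : ℝ → ℝ) (t : ℝ) : ℝ := ∫ y in Set.Iio t, φ0 y

/-- `A22 t = ∫_t^∞ φ1`. -/
noncomputable def A22 (φ1 : ℝ → ℝ) (t : ℝ) : ℝ := ∫ y in Set.Ioi t, φ1 y

/-- Single-threshold mutual information with `p0 = p1 = 1/2`. -/
noncomputable def I1 (φ0 φ1 : ℝ → ℝ) (t : ℝ) : ℝ :=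
  Hb ((1 / 2) * A11 φ0 t + (1 / 2) * (1 - A22 φ1 t)) -
    (1 / 2) * Hb (A11 φ0 t) - (1 / 2) * Hb (A22 φ1 t)

/-!
Put `t* = (μ0 + μ1) / 2`, `d = (μ1 - μ0) / 2`, and let `F` be the distribution function of the
centred noise density `φ`. At the threshold `t* + x` the mutual information is the Jensen–Shannon
divergence `J(x)` of the Bernoulli laws with parameters `a = F(x + d)` and `b = F(x - d)`. By the
symmetry of `φ` it is even in `x`, so it suffices that `J' < 0` for `x > 0`, that is, with
`m = (a + b) / 2`,
`φ(x + d) (logit a - logit m) < φ(x - d) (logit m - logit b)`.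

Let `U` and `V` be the two logit increments. Both `4 sinh² (U / 2)` and `4 sinh² (V / 2)` are
rational in `a`, `b`, `m`, and `a - m = m - b` gives
`sinh² (U / 2) a (1 - a) = sinh² (V / 2) b (1 - b)`. For `x > 0` we have `a + b > 1`, hence
`a (1 - a) < b (1 - b)` and `V < U`; as `sinh u / u` increases, `U² a (1 - a) < V² b (1 - b)`.
The inequality therefore holds as soon as `F (1 - F) / φ²` is monotone on `[0, ∞)`.

For the normal density of variance `v`, `F(x) / φ(x)` is proportional to
`∫ exp (x s / v) φ(s) ds` over `s > 0`. So `F(x) F(-x) / φ(x)²` is proportional to the double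
integral of `cosh (x (s - t) / v) φ(s) φ(t)`, which visibly increases with `|x|`.
-/

open ProbabilityTheory

section Logit

lemma strictConvexOn_sinh : StrictConvexOn ℝ (Ici 0) sinh := by
  refine StrictMonoOn.strictConvexOn_of_deriv (convex_Ici 0) continuous_sinh.continuousOn ?_
  rw [Real.deriv_sinh, interior_Ici]
  exact cosh_strictMonoOn.mono Ioi_subset_Ici_self

lemma mul_sinh_lt_mul_sinh {x y : ℝ} (hx : 0 < x) (hxy : x < y) : y * sinh x < x * sinh y := by
  have hy := hx.trans hxy
  have hslope := strictConvexOn_sinh.secant_strict_mono (mem_Ici.2 le_rfl) (mem_Ici.2 hx.le)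
    (mem_Ici.2 hy.le) hx.ne' hy.ne' hxy
  simp only [sinh_zero, sub_zero, div_lt_div_iff₀ hx hy] at hslope
  linarith

/-- The log-odds `log (p / (1 - p))`, the negative of the derivative of the binary entropy. -/
noncomputable def logit (p : ℝ) : ℝ := log p - log (1 - p)

lemma strictMonoOn_logit : StrictMonoOn logit (Ioo 0 1) := fun _ hp _ hq hpq ↦
  sub_lt_sub (log_lt_log hp.1 hpq) (log_lt_log (sub_pos.2 hq.2) (by linarith))

lemma exp_logit {p : ℝ} (hp : p ∈ Ioo 0 1) : exp (logit p) = p / (1 - p) := by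
  rw [logit, exp_sub, exp_log hp.1, exp_log (sub_pos.2 hp.2)]

lemma sinh_half_sq (x : ℝ) : sinh (x / 2) ^ 2 = (exp x + (exp x)⁻¹ - 2) / 4 := by
  have hsq : exp x = exp (x / 2) ^ 2 := by rw [← exp_nat_mul]; congr 1; push_cast; ring
  rw [hsq, sinh_eq, exp_neg]
  field_simp
  ring

lemma sinh_half_logit_sub_sq {p q : ℝ} (hp : p ∈ Ioo 0 1) (hq : q ∈ Ioo 0 1) :
    sinh ((logit p - logit q) / 2) ^ 2 * (4 * (p * (1 - p)) * (q * (1 - q))) = (p - q) ^ 2 := by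
  have hp0 := hp.1.ne'
  have hp1 := (sub_pos.2 hp.2).ne'
  have hq0 := hq.1.ne'
  have hq1 := (sub_pos.2 hq.2).ne'
  rw [sinh_half_sq, exp_sub, exp_logit hp, exp_logit hq]
  field_simp
  ring

lemma sinh_half_logit_sub_midpoint_sq_mul {a b : ℝ} (ha : a ∈ Ioo 0 1) (hb : b ∈ Ioo 0 1) :
    sinh ((logit a - logit ((a + b) / 2)) / 2) ^ 2 * (a * (1 - a))
      = sinh ((logit ((a + b) / 2) - logit b) / 2) ^ 2 * (b * (1 - b)) := by
  set m := (a + b) / 2 with hm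
  have hmm : m ∈ Ioo 0 1 := ⟨by linarith [ha.1, hb.1], by linarith [ha.2, hb.2]⟩
  refine mul_right_cancel₀ (mul_pos four_pos (mul_pos hmm.1 (sub_pos.2 hmm.2))).ne' ?_
  have hmid : (a - m) ^ 2 = (m - b) ^ 2 := by rw [hm]; ring
  linarith [sinh_half_logit_sub_sq ha hmm, sinh_half_logit_sub_sq hmm hb]

lemma logit_sub_midpoint_sq_mul_lt {a b : ℝ} (hb : 0 < b) (hba : b < a) (ha : a < 1)
    (hab : 1 < a + b) :
    (logit a - logit ((a + b) / 2)) ^ 2 * (a * (1 - a))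
      < (logit ((a + b) / 2) - logit b) ^ 2 * (b * (1 - b)) := by
  set m := (a + b) / 2 with hm
  have ham : a ∈ Ioo 0 1 := ⟨hb.trans hba, ha⟩
  have hbm : b ∈ Ioo 0 1 := ⟨hb, hba.trans ha⟩
  have hmm : m ∈ Ioo 0 1 := ⟨by linarith, by linarith⟩
  have hU : 0 < logit a - logit m := sub_pos.2 (strictMonoOn_logit hmm ham (by linarith))
  have hV : 0 < logit m - logit b := sub_pos.2 (strictMonoOn_logit hbm hmm (by linarith))
  have hsinh := sinh_half_logit_sub_midpoint_sq_mul ham hbm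
  rw [← hm] at hsinh
  set U := logit a - logit m
  set V := logit m - logit b
  have hvar_a : 0 < a * (1 - a) := mul_pos ham.1 (sub_pos.2 ha)
  have hvar : a * (1 - a) < b * (1 - b) := by nlinarith
  have hsinhU : 0 < sinh (U / 2) := sinh_pos_iff.2 (by linarith)
  have hsinhV : 0 < sinh (V / 2) := sinh_pos_iff.2 (by linarith)
  have hVU : V / 2 < U / 2 := by
    refine sinh_lt_sinh.1 (lt_of_pow_lt_pow_left₀ 2 hsinhU.le ?_)
    refine lt_of_mul_lt_mul_right ?_ hvar_a.le
    rw [hsinh]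
    exact mul_lt_mul_of_pos_left hvar (pow_pos hsinhV 2)
  have hratio : (U * sinh (V / 2)) ^ 2 < (V * sinh (U / 2)) ^ 2 := by
    have := mul_sinh_lt_mul_sinh (half_pos hV) hVU
    exact pow_lt_pow_left₀ (by linarith) (by positivity) two_ne_zero
  refine lt_of_mul_lt_mul_right ?_ (sq_nonneg (sinh (V / 2)))
  calc U ^ 2 * (a * (1 - a)) * sinh (V / 2) ^ 2
      = (U * sinh (V / 2)) ^ 2 * (a * (1 - a)) := by ring
    _ < (V * sinh (U / 2)) ^ 2 * (a * (1 - a)) := mul_lt_mul_of_pos_right hratio hvar_a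
    _ = V ^ 2 * (sinh (U / 2) ^ 2 * (a * (1 - a))) := by ring
    _ = V ^ 2 * (b * (1 - b)) * sinh (V / 2) ^ 2 := by rw [hsinh]; ring

lemma mul_logit_sub_midpoint_lt {a b α β : ℝ} (hb : 0 < b) (hba : b < a) (ha : a < 1)
    (hab : 1 < a + b) (hα : 0 < α) (hβ : 0 < β)
    (h : b * (1 - b) / β ^ 2 ≤ a * (1 - a) / α ^ 2) :
    α * (logit a - logit ((a + b) / 2)) < β * (logit ((a + b) / 2) - logit b) := by
  have hm : (a + b) / 2 ∈ Ioo 0 1 := ⟨by linarith, by linarith⟩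
  have hV : 0 < logit ((a + b) / 2) - logit b :=
    sub_pos.2 (strictMonoOn_logit ⟨hb, hba.trans ha⟩ hm (by linarith))
  have hUV := logit_sub_midpoint_sq_mul_lt hb hba ha hab
  set U := logit a - logit ((a + b) / 2)
  set V := logit ((a + b) / 2) - logit b
  have hvar_a : 0 < a * (1 - a) := mul_pos (hb.trans hba) (sub_pos.2 ha)
  rw [div_le_div_iff₀ (pow_pos hβ 2) (pow_pos hα 2)] at h
  refine lt_of_pow_lt_pow_left₀ 2 (by positivity) (lt_of_mul_lt_mul_right ?_ hvar_a.le)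
  calc (α * U) ^ 2 * (a * (1 - a)) = α ^ 2 * (U ^ 2 * (a * (1 - a))) := by ring
    _ < α ^ 2 * (V ^ 2 * (b * (1 - b))) := mul_lt_mul_of_pos_left hUV (pow_pos hα 2)
    _ = V ^ 2 * (b * (1 - b) * α ^ 2) := by ring
    _ ≤ V ^ 2 * (a * (1 - a) * β ^ 2) := mul_le_mul_of_nonneg_left h (sq_nonneg V)
    _ = (β * V) ^ 2 * (a * (1 - a)) := by ring

end Logit

section JensenShannon

/-- The Jensen–Shannon divergence of the Bernoulli laws with parameters `a` and `b`. It is the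
mutual information between a uniform input bit and the output of a binary channel whose output
law is Bernoulli `a` or Bernoulli `b` according to the input. -/
noncomputable def bernoulliJS (a b : ℝ) : ℝ :=
  binEntropy ((a + b) / 2) - (binEntropy a + binEntropy b) / 2

lemma bernoulliJS_comm (a b : ℝ) : bernoulliJS a b = bernoulliJS b a := by
  simp only [bernoulliJS, add_comm]

lemma bernoulliJS_one_sub (a b : ℝ) : bernoulliJS (1 - a) (1 - b) = bernoulliJS a b := by
  have hmid : (1 - a + (1 - b)) / 2 = 1 - (a + b) / 2 := by ring
  simp only [bernoulliJS, hmid, binEntropy_one_sub]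

lemma hasDerivAt_bernoulliJS_comp {f g : ℝ → ℝ} {f' g' x : ℝ} (hf : HasDerivAt f f' x)
    (hg : HasDerivAt g g' x) (hfx : f x ∈ Ioo 0 1) (hgx : g x ∈ Ioo 0 1) :
    HasDerivAt (fun y ↦ bernoulliJS (f y) (g y))
      ((f' * (logit (f x) - logit ((f x + g x) / 2))
        - g' * (logit ((f x + g x) / 2) - logit (g x))) / 2) x := by
  have hasDerivAt_entropy {p : ℝ} (hp : p ∈ Ioo 0 1) : HasDerivAt binEntropy (-logit p) p :=
    (hasDerivAt_binEntropy hp.1.ne' hp.2.ne).congr_deriv (by rw [logit]; ring)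
  have hmid : (f x + g x) / 2 ∈ Ioo 0 1 :=
    ⟨by linarith [hfx.1, hgx.1], by linarith [hfx.2, hgx.2]⟩
  have hMix := (hasDerivAt_entropy hmid).comp x ((hf.add hg).div_const 2)
  have hF := (hasDerivAt_entropy hfx).comp x hf
  have hG := (hasDerivAt_entropy hgx).comp x hg
  exact (hMix.sub ((hF.add hG).div_const 2)).congr_deriv (by ring)

lemma Hb_eq_binEntropy : Hb = binEntropy := by
  funext w
  simp only [Hb, binEntropy_eq_negMulLog_add_negMulLog_one_sub, negMulLog]
  ring

end JensenShannon

section DistributionFunction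

variable {φ : ℝ → ℝ}

lemma A11_comp_sub_right (φ : ℝ → ℝ) (c t : ℝ) : A11 (fun y ↦ φ (y - c)) t = A11 φ (t - c) := by
  have h := (measurePreserving_sub_right volume c).setIntegral_preimage_emb
    (measurableEmbedding_subRight c) φ (Iio (t - c))
  simpa only [A11, preimage_sub_const_Iio, sub_add_cancel] using h

lemma A22_comp_sub_right (φ : ℝ → ℝ) (c t : ℝ) : A22 (fun y ↦ φ (y - c)) t = A22 φ (t - c) := by
  have h := (measurePreserving_sub_right volume c).setIntegral_preimage_emb
    (measurableEmbedding_subRight c) φ (Ioi (t - c))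
  simpa only [A22, preimage_sub_const_Ioi, sub_add_cancel] using h

lemma A11_eq_A22_neg (heven : Function.Even φ) (t : ℝ) : A11 φ t = A22 φ (-t) := by
  have h := integral_comp_neg_Ioi (-t) φ
  rw [neg_neg, integral_Iic_eq_integral_Iio] at h
  rw [A11, A22, ← h]
  simp only [heven.eq]

lemma A22_eq_one_sub_A11 (hone : ∫ y, φ y = 1) (t : ℝ) : A22 φ t = 1 - A11 φ t := by
  have hφ := integrable_of_integral_eq_one hone
  have h := intervalIntegral.integral_Iic_add_Ioi (b := t) hφ.integrableOn hφ.integrableOn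
  rw [integral_Iic_eq_integral_Iio, hone] at h
  exact eq_sub_of_add_eq' h

lemma A11_neg (heven : Function.Even φ) (hone : ∫ y, φ y = 1) (t : ℝ) :
    A11 φ (-t) = 1 - A11 φ t := by
  rw [A11_eq_A22_neg heven, neg_neg, A22_eq_one_sub_A11 hone]

lemma hasDerivAt_A11 (hcont : Continuous φ) (hφ : Integrable φ) (t : ℝ) :
    HasDerivAt (A11 φ) (φ t) t := by
  have hsplit : A11 φ = fun u ↦ A11 φ 0 + ∫ y in (0 : ℝ)..u, φ y := by
    funext u
    have := intervalIntegral.integral_Iio_sub_Iio' (a := 0) (b := u)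
      hφ.integrableOn hφ.integrableOn
    exact eq_add_of_sub_eq' this
  rw [hsplit]
  exact (hcont.integral_hasStrictDerivAt 0 t).hasDerivAt.const_add _

lemma strictMono_A11 (hcont : Continuous φ) (hφ : Integrable φ) (hpos : ∀ y, 0 < φ y) :
    StrictMono (A11 φ) :=
  strictMono_of_hasDerivAt_pos (hasDerivAt_A11 hcont hφ) hpos

lemma A11_mem_Ioo (hcont : Continuous φ) (hone : ∫ y, φ y = 1) (hpos : ∀ y, 0 < φ y) (t : ℝ) :
    A11 φ t ∈ Ioo 0 1 := by
  have hmono := strictMono_A11 hcont (integrable_of_integral_eq_one hone) hpos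
  have hnonneg (u : ℝ) : 0 ≤ A11 φ u := integral_nonneg fun y ↦ (hpos y).le
  have hle (u : ℝ) : A11 φ u ≤ 1 := by
    have : 0 ≤ A22 φ u := integral_nonneg fun y ↦ (hpos y).le
    rw [A22_eq_one_sub_A11 hone] at this
    linarith
  exact ⟨(hnonneg (t - 1)).trans_lt (hmono (by linarith)),
    (hmono (by linarith)).trans_le (hle (t + 1))⟩

lemma I1_comp_sub_right (hone : ∫ y, φ y = 1) (c₀ c₁ t : ℝ) :
    I1 (fun y ↦ φ (y - c₀)) (fun y ↦ φ (y - c₁)) t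
      = bernoulliJS (A11 φ (t - c₀)) (A11 φ (t - c₁)) := by
  have hmid (a b : ℝ) : 1 / 2 * a + 1 / 2 * b = (a + b) / 2 := by ring
  rw [I1, A11_comp_sub_right, A22_comp_sub_right, A22_eq_one_sub_A11 hone, Hb_eq_binEntropy,
    binEntropy_one_sub, sub_sub_cancel, hmid, bernoulliJS]
  ring

end DistributionFunction

section SymmetricNoise

variable {φ : ℝ → ℝ}

lemma even_apply_abs {α β : Type*} [AddGroup α] [LinearOrder α] {f : α → β}
    (hf : Function.Even f) (x : α) : f |x| = f x := by
  rcases abs_choice x with h | h <;> rw [h]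
  exact hf x

lemma even_bernoulliJS_A11 (heven : Function.Even φ) (hone : ∫ y, φ y = 1) (d : ℝ) :
    Function.Even fun x ↦ bernoulliJS (A11 φ (x + d)) (A11 φ (x - d)) := fun x ↦ by
  have hadd : -x + d = -(x - d) := by ring
  have hsub : -x - d = -(x + d) := by ring
  simp only [hadd, hsub, A11_neg heven hone, bernoulliJS_one_sub]
  exact bernoulliJS_comm _ _

lemma strictAntiOn_bernoulliJS_A11 (hcont : Continuous φ) (hpos : ∀ y, 0 < φ y)
    (heven : Function.Even φ) (hone : ∫ y, φ y = 1)
    (hmono : MonotoneOn (fun x ↦ A11 φ x * (1 - A11 φ x) / φ x ^ 2) (Ici 0))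
    {d : ℝ} (hd : 0 < d) :
    StrictAntiOn (fun x ↦ bernoulliJS (A11 φ (x + d)) (A11 φ (x - d))) (Ici 0) := by
  have hφ := integrable_of_integral_eq_one hone
  have hF := A11_mem_Ioo hcont hone hpos
  have hF_mono := strictMono_A11 hcont hφ hpos
  have hderiv (x : ℝ) := hasDerivAt_bernoulliJS_comp
    ((hasDerivAt_A11 hcont hφ (x + d)).comp_add_const x d)
    ((hasDerivAt_A11 hcont hφ (x - d)).comp_sub_const x d) (hF _) (hF _)
  refine strictAntiOn_of_deriv_neg (convex_Ici 0)
    (fun x _ ↦ (hderiv x).continuousAt.continuousWithinAt) fun x hx ↦ ?_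
  rw [interior_Ici, mem_Ioi] at hx
  rw [(hderiv x).deriv]
  have hsum : 1 < A11 φ (x + d) + A11 φ (x - d) := by
    have : A11 φ (-(x - d)) < A11 φ (x + d) := hF_mono (by linarith)
    rw [A11_neg heven hone] at this
    linarith
  have hratio_even :
      Function.Even fun x ↦ A11 φ x * (1 - A11 φ x) / φ x ^ 2 := fun u ↦ by
    simp only [A11_neg heven hone, heven.eq, sub_sub_cancel, mul_comm]
  have hratio : A11 φ (x - d) * (1 - A11 φ (x - d)) / φ (x - d) ^ 2
      ≤ A11 φ (x + d) * (1 - A11 φ (x + d)) / φ (x + d) ^ 2 := by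
    have habs : |x - d| ≤ x + d := abs_le.2 ⟨by linarith, by linarith⟩
    exact (even_apply_abs hratio_even (x - d)).ge.trans
      (hmono (abs_nonneg (x - d)) (mem_Ici.2 (by linarith)) habs)
  have := mul_logit_sub_midpoint_lt (hF (x - d)).1 (hF_mono (by linarith)) (hF (x + d)).2 hsum
    (hpos _) (hpos _) hratio
  linarith

theorem stmt_16_general (hcont : Continuous φ) (hpos : ∀ y, 0 < φ y) (heven : Function.Even φ)
    (hone : ∫ y, φ y = 1)
    (hmono : MonotoneOn (fun x ↦ A11 φ x * (1 - A11 φ x) / φ x ^ 2) (Ici 0))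
    {μ0 μ1 : ℝ} (hμ : μ0 < μ1) {φ0 φ1 : ℝ → ℝ} (hφ0 : φ0 = fun y ↦ φ (y - μ0))
    (hφ1 : φ1 = fun y ↦ φ (y - μ1)) :
    (∀ t : ℝ, I1 φ0 φ1 t ≤ I1 φ0 φ1 ((μ0 + μ1) / 2)) ∧
    (∀ t : ℝ, I1 φ0 φ1 t = I1 φ0 φ1 ((μ0 + μ1) / 2) → t = (μ0 + μ1) / 2) := by
  set d := (μ1 - μ0) / 2 with hd
  set J : ℝ → ℝ := fun x ↦ bernoulliJS (A11 φ (x + d)) (A11 φ (x - d)) with hJ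
  have hI1 (t : ℝ) : I1 φ0 φ1 t = J (t - (μ0 + μ1) / 2) := by
    rw [hφ0, hφ1, I1_comp_sub_right hone, hJ, hd]
    ring_nf
  have hJ_even : Function.Even J := even_bernoulliJS_A11 heven hone d
  have hanti : StrictAntiOn J (Ici 0) :=
    strictAntiOn_bernoulliJS_A11 hcont hpos heven hone hmono (by linarith)
  have hlt (t : ℝ) (ht : t ≠ (μ0 + μ1) / 2) : I1 φ0 φ1 t < I1 φ0 φ1 ((μ0 + μ1) / 2) := by
    rw [hI1, hI1, sub_self, ← even_apply_abs hJ_even]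
    exact hanti self_mem_Ici (mem_Ici.2 (abs_nonneg _)) (abs_pos.2 (sub_ne_zero.2 ht))
  refine ⟨fun t ↦ ?_, fun t ↦ not_imp_not.1 fun ht ↦ (hlt t ht).ne⟩
  rcases eq_or_ne t ((μ0 + μ1) / 2) with rfl | ht
  exacts [le_rfl, (hlt t ht).le]

end SymmetricNoise

section Mgf

variable {Ω : Type*} {mΩ : MeasurableSpace Ω} {μ : Measure Ω} {X : Ω → ℝ} {s t : ℝ}

lemma integrable_cosh_mul_sub (h : Integrable (fun ω ↦ exp (t * X ω)) μ)
    (hneg : Integrable (fun ω ↦ exp (-t * X ω)) μ) :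
    Integrable (fun ω : Ω × Ω ↦ cosh (t * (X ω.1 - X ω.2))) (μ.prod μ) := by
  refine (((h.mul_prod hneg).add (hneg.mul_prod h)).div_const 2).congr (ae_of_all _ fun ω ↦ ?_)
  simp only [Pi.add_apply, cosh_eq, ← exp_add]
  ring_nf

lemma mgf_mul_mgf_neg [SFinite μ] (h : Integrable (fun ω ↦ exp (t * X ω)) μ)
    (hneg : Integrable (fun ω ↦ exp (-t * X ω)) μ) :
    mgf X μ t * mgf X μ (-t) = ∫ ω : Ω × Ω, cosh (t * (X ω.1 - X ω.2)) ∂μ.prod μ := by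
  have hcosh (ω : Ω × Ω) : cosh (t * (X ω.1 - X ω.2))
      = (exp (t * X ω.1) * exp (-t * X ω.2) + exp (-t * X ω.1) * exp (t * X ω.2)) / 2 := by
    simp only [cosh_eq, ← exp_add]
    ring_nf
  simp only [hcosh]
  rw [integral_div, integral_add (h.mul_prod hneg) (hneg.mul_prod h),
    integral_prod_mul (fun ω ↦ exp (t * X ω)) fun ω ↦ exp (-t * X ω),
    integral_prod_mul (fun ω ↦ exp (-t * X ω)) fun ω ↦ exp (t * X ω), mgf, mgf]
  ring

lemma mgf_mul_mgf_neg_le [SFinite μ] (hst : |s| ≤ |t|)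
    (h : Integrable (fun ω ↦ exp (t * X ω)) μ) (hneg : Integrable (fun ω ↦ exp (-t * X ω)) μ) :
    mgf X μ s * mgf X μ (-s) ≤ mgf X μ t * mgf X μ (-t) := by
  have hs := integrable_exp_mul_of_abs_le h hneg hst
  have hs_neg := integrable_exp_mul_of_abs_le h hneg ((abs_neg s).trans_le hst)
  rw [mgf_mul_mgf_neg hs hs_neg, mgf_mul_mgf_neg h hneg]
  refine integral_mono (integrable_cosh_mul_sub hs hs_neg) (integrable_cosh_mul_sub h hneg)
    fun ω ↦ cosh_le_cosh.2 ?_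
  rw [abs_mul, abs_mul]
  exact mul_le_mul_of_nonneg_right hst (abs_nonneg _)

end Mgf

section Gaussian

open scoped NNReal

variable {v : ℝ≥0}

lemma continuous_gaussianPDFReal (μ : ℝ) (v : ℝ≥0) : Continuous (gaussianPDFReal μ v) := by
  rw [gaussianPDFReal_def]
  fun_prop

lemma even_gaussianPDFReal_zero (v : ℝ≥0) : Function.Even (gaussianPDFReal 0 v) := fun x ↦ by
  simp only [gaussianPDFReal, sub_zero, neg_sq]

lemma gaussianPDFReal_zero_sub_mul (hv : v ≠ 0) (x y : ℝ) :
    gaussianPDFReal 0 v (x - y) * gaussianPDFReal 0 v 0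
      = gaussianPDFReal 0 v x * (gaussianPDFReal 0 v y * exp (x / v * y)) := by
  have hv' : (v : ℝ) ≠ 0 := NNReal.coe_ne_zero.2 hv
  have hexp : exp (-(x - y) ^ 2 / (2 * v))
      = exp (-x ^ 2 / (2 * v)) * (exp (-y ^ 2 / (2 * v)) * exp (x / v * y)) := by
    rw [← exp_add, ← exp_add]
    congr 1
    field_simp
    ring
  simp only [gaussianPDFReal, sub_zero, hexp, zero_pow two_ne_zero, neg_zero, zero_div, exp_zero]
  ring

lemma A11_gaussianPDFReal_mul (hv : v ≠ 0) (x : ℝ) :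
    A11 (gaussianPDFReal 0 v) x * gaussianPDFReal 0 v 0
      = gaussianPDFReal 0 v x * mgf id ((gaussianReal 0 v).restrict (Ioi 0)) (x / v) := by
  have hA11 : A11 (gaussianPDFReal 0 v) x = ∫ y in Ioi 0, gaussianPDFReal 0 v (x - y) := by
    rw [A11_eq_A22_neg (even_gaussianPDFReal_zero v), ← zero_sub x, ← A22_comp_sub_right, A22]
    simp only [← (even_gaussianPDFReal_zero v).eq (_ - x), neg_sub]
  have hmgf : mgf id ((gaussianReal 0 v).restrict (Ioi 0)) (x / v)
      = ∫ y in Ioi 0, gaussianPDFReal 0 v y * exp (x / v * y) := by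
    simp only [mgf, id, gaussianReal_of_var_ne_zero 0 hv]
    rw [setIntegral_withDensity_eq_setIntegral_toReal_smul (measurable_gaussianPDF 0 v)
      (ae_of_all _ fun _ ↦ gaussianPDF_lt_top) _ measurableSet_Ioi]
    simp only [toReal_gaussianPDF, smul_eq_mul]
  rw [hA11, hmgf, ← integral_mul_const, ← integral_const_mul]
  simp only [gaussianPDFReal_zero_sub_mul hv]

lemma monotoneOn_A11_mul_one_sub_div_gaussianPDFReal_sq (hv : v ≠ 0) :
    MonotoneOn (fun x ↦ A11 (gaussianPDFReal 0 v) x * (1 - A11 (gaussianPDFReal 0 v) x)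
      / gaussianPDFReal 0 v x ^ 2) (Ici 0) := by
  set p := gaussianPDFReal 0 v
  set ν := (gaussianReal 0 v).restrict (Ioi 0)
  have hp_even : Function.Even p := even_gaussianPDFReal_zero v
  have hp_ne (y : ℝ) : p y ≠ 0 := (gaussianPDFReal_pos 0 v y hv).ne'
  have hA11 (x : ℝ) : A11 p x = p x * mgf id ν (x / v) / p 0 :=
    eq_div_of_mul_eq (hp_ne 0) (A11_gaussianPDFReal_mul hv x)
  have hratio (x : ℝ) : A11 p x * (1 - A11 p x) / p x ^ 2
      = mgf id ν (x / v) * mgf id ν (-(x / v)) / p 0 ^ 2 := by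
    rw [← A11_neg hp_even (integral_gaussianPDFReal_eq_one 0 hv), hA11, hA11, hp_even.eq, neg_div]
    field_simp [hp_ne x, hp_ne 0]
  have hexp_int (t : ℝ) : Integrable (fun y ↦ exp (t * id y)) ν :=
    (integrable_exp_mul_gaussianReal t).restrict
  intro x hx y _ hxy
  simp only [hratio]
  refine div_le_div_of_nonneg_right (mgf_mul_mgf_neg_le ?_ (hexp_int _) (hexp_int _)) (sq_nonneg _)
  rw [abs_div, abs_div, abs_of_nonneg hx, abs_of_nonneg (hx.trans hxy)]
  exact div_le_div_of_nonneg_right hxy (abs_nonneg _)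

lemma gaussianPDFReal_zero_toNNReal_sq_sub {σ : ℝ} (hσ : 0 ≤ σ) (μ y : ℝ) :
    gaussianPDFReal 0 (σ.toNNReal ^ 2) (y - μ)
      = 1 / (σ * √(2 * π)) * exp (-(y - μ) ^ 2 / (2 * σ ^ 2)) := by
  rw [gaussianPDFReal, NNReal.coe_pow, coe_toNNReal σ hσ, sqrt_mul (by positivity), sqrt_sq hσ,
    sub_zero, one_div, mul_comm σ]

end Gaussian

/-- for equal-variance Gaussian densities with means `μ0 < μ1` and
uniform input probabilities, the midpoint `t* = (μ0 + μ1)/2` is the unique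
maximizer of the single-threshold mutual information. -/
theorem stmt_16
    (σ μ0 μ1 : ℝ) (hσ : 0 < σ) (hμ : μ0 < μ1)
    (φ0 φ1 : ℝ → ℝ)
    (hφ0 : φ0 = fun y =>
      (1 / (σ * Real.sqrt (2 * Real.pi))) * Real.exp (-(y - μ0) ^ 2 / (2 * σ ^ 2)))
    (hφ1 : φ1 = fun y =>
      (1 / (σ * Real.sqrt (2 * Real.pi))) * Real.exp (-(y - μ1) ^ 2 / (2 * σ ^ 2))) :
    (∀ t : ℝ, I1 φ0 φ1 t ≤ I1 φ0 φ1 ((μ0 + μ1) / 2)) ∧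
    (∀ t : ℝ, I1 φ0 φ1 t = I1 φ0 φ1 ((μ0 + μ1) / 2) → t = (μ0 + μ1) / 2) := by
  have hv : σ.toNNReal ^ 2 ≠ 0 := pow_ne_zero 2 (toNNReal_pos.2 hσ).ne'
  simp only [← gaussianPDFReal_zero_toNNReal_sq_sub hσ.le] at hφ0 hφ1
  exact stmt_16_general (continuous_gaussianPDFReal 0 _) (fun y ↦ gaussianPDFReal_pos 0 _ y hv)
    (even_gaussianPDFReal_zero _) (integral_gaussianPDFReal_eq_one 0 hv)
    (monotoneOn_A11_mul_one_sub_div_gaussianPDFReal_sq hv) hμ hφ0 hφ1
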